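/- arXiv:2308.16146 — 2 statements merged into one kernel-verified Lean document; each statement's English description precedes it below -/
import Mathlib

section
/- For n ∈ {1, 2}, the supremum over Q ∈ O(n) of the GEPP growth factor ρ^{GEPP}(Q) equals 2^{n−1}. For every n ≥ 3 and every Q ∈ O(n), ρ^{GEPP}(Q) < 2^{n−1} (strict inequality). -/
open Matrix Filter

/-- Gaussian-elimination intermediate entry `A^{(k+1)}_{ij}` (0-indexed step `k`):
the Schur complement of the leading `k × k` block. -/
noncomputable def geEntry {n : ℕ} (A : Matrix (Fin n) (Fin n) ℝ) (k i j : Fin n) : ℝ :=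
  A i j - ∑ a : Fin k.val, ∑ b : Fin k.val,
    A i (Fin.castLE k.isLt.le a) *
      (A.submatrix (Fin.castLE k.isLt.le) (Fin.castLE k.isLt.le))⁻¹ a b *
      A (Fin.castLE k.isLt.le b) j

/-- `A` is PP: at each GE step the pivot dominates its column. -/
def IsPP {n : ℕ} (A : Matrix (Fin n) (Fin n) ℝ) : Prop :=
  ∀ k i : Fin n, k ≤ i → |geEntry A k i k| ≤ |geEntry A k k k|

/-- `A` is CP: at each GE step the pivot dominates the whole untriangularized block. -/
def IsCP {n : ℕ} (A : Matrix (Fin n) (Fin n) ℝ) : Prop :=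
  ∀ k i j : Fin n, k ≤ i → k ≤ j → |geEntry A k i j| ≤ |geEntry A k k k|

/-- Maximal absolute Gaussian-elimination intermediate entry of `A`. -/
noncomputable def maxGE {n : ℕ} (A : Matrix (Fin n) (Fin n) ℝ) : ℝ :=
  ⨆ k : Fin n, ⨆ i : {i : Fin n // k ≤ i}, ⨆ j : {j : Fin n // k ≤ j},
    |geEntry A k i.1 j.1|

/-- `max_{i,j} |A_{ij}|`. -/
noncomputable def maxAbs {n : ℕ} (A : Matrix (Fin n) (Fin n) ℝ) : ℝ :=
  ⨆ i, ⨆ j, |A i j|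

/-- Growth factor `ρ(A)`. -/
noncomputable def growth {n : ℕ} (A : Matrix (Fin n) (Fin n) ℝ) : ℝ :=
  maxGE A / maxAbs A

/-- `P` is a permutation matrix. -/
def IsPermMatrix {n : ℕ} (P : Matrix (Fin n) (Fin n) ℝ) : Prop :=
  ∃ σ : Equiv.Perm (Fin n), P = σ.permMatrix ℝ

/-- `D` is a diagonal matrix with diagonal entries `±1`. -/
def IsSignDiag {n : ℕ} (D : Matrix (Fin n) (Fin n) ℝ) : Prop :=
  (∀ i j, i ≠ j → D i j = 0) ∧ (∀ i, D i i = 1 ∨ D i i = -1)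

/-- Wilkinson's unipotent lower triangular matrix `L_n`. -/
def Lmat (n : ℕ) : Matrix (Fin n) (Fin n) ℝ :=
  fun i j => if i = j then 1 else if j < i then -1 else 0

/-- Wilkinson's upper triangular factor `U_n`. -/
def Umat (n : ℕ) : Matrix (Fin n) (Fin n) ℝ :=
  fun i j => if (j : ℕ) = n - 1 then 2 ^ (i : ℕ) else if i = j then 1 else 0

/-- Wilkinson's worst-case GEPP growth matrix `A_n`. -/
def Amat (n : ℕ) : Matrix (Fin n) (Fin n) ℝ :=
  fun i j =>
    if (j : ℕ) = n - 1 ∧ (i : ℕ) < n - 1 then 1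
    else if i = j then 1
    else if j < i then -1
    else 0

/-- `α_j = 1 + (2/3)(4^{j-1} - 1)` (1-indexed `j`). -/
noncomputable def alpha (j : ℕ) : ℝ := 1 + 2 / 3 * (4 ^ (j - 1) - 1)

/-- The unnormalized orthogonal factor `Q̂` (columns of `Qhat n` are, 1-indexed,
the columns described in the paper; here 0-indexed). -/
noncomputable def Qhat (n : ℕ) : Matrix (Fin n) (Fin n) ℝ :=
  fun i j =>
    if (j : ℕ) = n - 1 then
      if (i : ℕ) = n - 1 then 1 else 2 ^ (n - 2 - (i : ℕ))
    else if (j : ℕ) = n - 2 then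
      if (i : ℕ) = n - 2 then 1 else if (i : ℕ) = n - 1 then -1 else 0
    else if (i : ℕ) < (j : ℕ) then
      -((n : ℝ) - (j : ℕ) - 2) * 2 ^ ((j : ℕ) - (i : ℕ) - 1)
    else if (i : ℕ) = (j : ℕ) then
      ((n : ℝ) - (j : ℕ) - 1) * (alpha ((j : ℕ) + 1) - 1) + 1
    else -alpha ((j : ℕ) + 1)

/-- The diagonal normalization matrix `D̂`. -/
noncomputable def Dhat (n : ℕ) : Matrix (Fin n) (Fin n) ℝ :=
  Matrix.diagonal fun j =>
    if (j : ℕ) = 0 then (n : ℝ)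
    else if (j : ℕ) = n - 2 then 2
    else if (j : ℕ) = n - 1 then 2 * alpha (n - 1)
    else ((n : ℝ) - (j : ℕ) - 1) ^ 2 * (alpha ((j : ℕ) + 1) - 1) ^ 2 *
        (2 * alpha ((j : ℕ) + 1) - 1) / (2 * alpha ((j : ℕ) + 1) - 2) +
      ((n : ℝ) - (j : ℕ) - 1) * (alpha ((j : ℕ) + 1) ^ 2 + alpha ((j : ℕ) + 1) - 1) +
      2 * alpha (j : ℕ)

/-- `Q_n = Q̂ D̂^{-1/2}`, the orthogonal QR factor of `L_n`. -/
noncomputable def Qmat (n : ℕ) : Matrix (Fin n) (Fin n) ℝ :=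
  Qhat n * Matrix.diagonal fun m => (Real.sqrt (Dhat n m m))⁻¹

/-- Frobenius norm. -/
noncomputable def frobNorm {n : ℕ} (M : Matrix (Fin n) (Fin n) ℝ) : ℝ :=
  Real.sqrt (∑ i, ∑ j, M i j ^ 2)

/-- The Givens rotation `G(θ, i, j)`. -/
noncomputable def givens (n : ℕ) (θ : ℝ) (i j : Fin n) : Matrix (Fin n) (Fin n) ℝ :=
  fun a b =>
    if a = i ∧ b = i then Real.cos θ
    else if a = j ∧ b = j then Real.cos θ
    else if a = i ∧ b = j then -Real.sin θ
    else if a = j ∧ b = i then Real.sin θ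
    else if a = b then 1 else 0

/-- The ordered product of Givens rotations `Q(θ) = ∏_{i=1}^{n-1} ∏_{j=i+1}^n G(θ_{ij}, i, j)`. -/
noncomputable def QofTheta (n : ℕ) (θ : Fin n → Fin n → ℝ) : Matrix (Fin n) (Fin n) ℝ :=
  ((List.finRange n).map fun i =>
    (((List.finRange n).filter fun j => decide (i < j)).map fun j =>
      givens n (θ i j) i j).prod).prod

/-!
Write `M` for the largest absolute entry of `A`. If `A` is invertible and PP, no pivot vanishes: a
zero pivot would be maximal in its column, so that this column of `A` would be a combination of the
earlier ones. Each elimination step therefore subtracts from a row a multiple, by a factor of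
absolute value at most `1`, of the pivot row, and since the pivot row obeys the same bound,
`|A^{(k)}_{ij}| ≤ |A_{ij}| + (2^{k-1} - 1) M ≤ 2^{k-1} M`. Hence the growth factor is at most
`2^{n-1}`, and only the last pivot can reach this value, in which case `|A_{nn}| = M`.

The last pivot is the reciprocal of `(A⁻¹)_{nn}`, which is `A_{nn}` for orthogonal `A`. Growth
`2^{n-1}` thus forces `2^{n-1} M² = 1`, whereas `n M² ≥ 1` because the columns are unit vectors;
this is impossible once `2^{n-1} > n`, that is, for `n ≥ 3`. For `n = 2` a normalized Hadamard
matrix attains the bound.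
-/

section Elimination

variable {n : ℕ} (A : Matrix (Fin n) (Fin n) ℝ)

/-- The leading principal `k × k` submatrix of `A`, whose determinant is the `k`-th leading
principal minor. -/
def leadingBlock {k : ℕ} (hk : k ≤ n) : Matrix (Fin k) (Fin k) ℝ :=
  A.submatrix (Fin.castLE hk) (Fin.castLE hk)

/-- The coefficients of the first `k` columns of `A` in the combination that is subtracted from
column `j` by the first `k` elimination steps. They depend on the junk value of the inverse when the
leading block is singular. -/
noncomputable def elimCoeff (k j : Fin n) : Fin k → ℝ :=
  (leadingBlock A k.isLt.le)⁻¹ *ᵥ fun b => A (Fin.castLE k.isLt.le b) j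

theorem geEntry_eq_sub_sum_elimCoeff (k i j : Fin n) :
    geEntry A k i j = A i j - ∑ a, A i (Fin.castLE k.isLt.le a) * elimCoeff A k j a := by
  simp only [geEntry, elimCoeff, leadingBlock, mulVec, dotProduct, Finset.mul_sum, mul_assoc]

theorem geEntry_of_val_eq_zero {k : Fin n} (hk : k.val = 0) (i j : Fin n) :
    geEntry A k i j = A i j := by
  have : IsEmpty (Fin k.val) := by rw [hk]; infer_instance
  simp [geEntry]

variable {A}

theorem geEntry_eq_sub_sum {k : Fin n} (hk : IsUnit (leadingBlock A k.isLt.le).det) {j : Fin n}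
    {x : Fin k → ℝ}
    (hx : ∀ i < k, A i j = ∑ a, A i (Fin.castLE k.isLt.le a) * x a) (i : Fin n) :
    geEntry A k i j = A i j - ∑ a, A i (Fin.castLE k.isLt.le a) * x a := by
  have hsolve : leadingBlock A k.isLt.le *ᵥ x = fun b => A (Fin.castLE k.isLt.le b) j :=
    funext fun b => (hx _ b.isLt).symm
  have hx_eq : elimCoeff A k j = x := by
    rw [elimCoeff, ← hsolve, mulVec_mulVec, nonsing_inv_mul _ hk, one_mulVec]
  rw [geEntry_eq_sub_sum_elimCoeff, hx_eq]

theorem geEntry_eq_zero_of_lt {k i : Fin n} (hk : IsUnit (leadingBlock A k.isLt.le).det)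
    (hi : i < k) (j : Fin n) : geEntry A k i j = 0 := by
  have hsolve : leadingBlock A k.isLt.le *ᵥ elimCoeff A k j =
      fun b => A (Fin.castLE k.isLt.le b) j := by
    rw [elimCoeff, mulVec_mulVec, mul_nonsing_inv _ hk, one_mulVec]
  rw [geEntry_eq_sub_sum_elimCoeff, sub_eq_zero]
  exact (congrFun hsolve ⟨i, hi⟩).symm

theorem det_leadingBlock_succ {k : Fin n} (hk : IsUnit (leadingBlock A k.isLt.le).det) :
    (leadingBlock A (k := k + 1) k.isLt).det =
      (leadingBlock A k.isLt.le).det * geEntry A k k k := by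
  have := invertibleOfIsUnitDet _ hk
  have hinit (a : Fin k) : Fin.castLE (n := k + 1) k.isLt (Fin.castAdd 1 a) =
      Fin.castLE k.isLt.le a := rfl
  have hlast (b : Fin 1) : Fin.castLE (n := k + 1) k.isLt (Fin.natAdd k b) = k :=
    Fin.ext (by simp)
  have hblocks : (leadingBlock A (k := k + 1) k.isLt).submatrix finSumFinEquiv finSumFinEquiv =
      fromBlocks (leadingBlock A k.isLt.le)
        (of fun a (_ : Fin 1) => A (Fin.castLE k.isLt.le a) k)
        (of fun (_ : Fin 1) b => A k (Fin.castLE k.isLt.le b))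
        (of fun _ _ => A k k) := by
    ext (a | a) (b | b) <;> simp [leadingBlock, hinit, hlast]
  rw [← det_submatrix_equiv_self finSumFinEquiv, hblocks, det_fromBlocks₁₁, det_fin_one,
    Matrix.mul_assoc, invOf_eq_nonsing_inv, geEntry_eq_sub_sum_elimCoeff]
  rfl

theorem geEntry_succ {p : Fin n} (hp : p.val + 1 < n)
    (hdet : IsUnit (leadingBlock A p.isLt.le).det) (hpivot : geEntry A p p p ≠ 0) (i j : Fin n) :
    geEntry A ⟨p + 1, hp⟩ i j =
      geEntry A p i j - geEntry A p p j / geEntry A p p p * geEntry A p i p := by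
  set t := geEntry A p p j / geEntry A p p p with ht
  let x : Fin (p + 1) → ℝ := Fin.snoc (elimCoeff A p j - t • elimCoeff A p p) t
  have hx (i : Fin n) : A i j - ∑ a, A i (Fin.castLE hp.le a) * x a =
      geEntry A p i j - t * geEntry A p i p := by
    have hcast (a : Fin p) : Fin.castLE hp.le a.castSucc = Fin.castLE p.isLt.le a := rfl
    have hlast : Fin.castLE hp.le (Fin.last p) = p := rfl
    simp only [x, geEntry_eq_sub_sum_elimCoeff, Fin.sum_univ_castSucc, Fin.snoc_castSucc,
      Fin.snoc_last, hcast, hlast, Pi.sub_apply, Pi.smul_apply, smul_eq_mul, mul_sub,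
      Finset.sum_sub_distrib, Finset.mul_sum, mul_left_comm t]
    ring
  have hdet' : IsUnit (leadingBlock A hp.le).det := by
    rw [det_leadingBlock_succ hdet]
    exact hdet.mul hpivot.isUnit
  rw [← hx]
  refine geEntry_eq_sub_sum hdet' (fun i hi => sub_eq_zero.mp ?_) i
  rw [hx]
  rcases (Fin.le_def.mpr (Nat.lt_succ_iff.mp hi) : i ≤ p).lt_or_eq with hlt | rfl
  · simp only [geEntry_eq_zero_of_lt hdet hlt, mul_zero, sub_zero]
  · rw [ht, div_mul_cancel₀ _ hpivot, sub_self]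

theorem geEntry_last_mul_inv {m : ℕ} {A : Matrix (Fin (m + 1)) (Fin (m + 1)) ℝ}
    (hA : IsUnit A.det) (hlast : IsUnit (leadingBlock A m.le_succ).det) :
    geEntry A (Fin.last m) (Fin.last m) (Fin.last m) * A⁻¹ (Fin.last m) (Fin.last m) = 1 := by
  have hdet : A.det = (leadingBlock A m.le_succ).det *
      geEntry A (Fin.last m) (Fin.last m) (Fin.last m) :=
    det_leadingBlock_succ (k := Fin.last m) hlast
  have hinv : A⁻¹ (Fin.last m) (Fin.last m) = A.det⁻¹ * (leadingBlock A m.le_succ).det := by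
    rw [inv_def, Matrix.smul_apply, adjugate_fin_succ_eq_det_submatrix, Fin.succAbove_last,
      Even.neg_one_pow ⟨_, rfl⟩, one_mul, Ring.inverse_eq_inv', smul_eq_mul]
    rfl
  rw [hinv, mul_left_comm, mul_comm (geEntry _ _ _ _), ← hdet, inv_mul_cancel₀ hA.ne_zero]

end Elimination

section MaxNorms

variable {n : ℕ} {A : Matrix (Fin n) (Fin n) ℝ}

theorem abs_le_maxAbs (A : Matrix (Fin n) (Fin n) ℝ) (i j : Fin n) : |A i j| ≤ maxAbs A :=
  (le_ciSup (f := fun j => |A i j|) (Set.finite_range _).bddAbove j).trans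
    (le_ciSup (f := fun i => ⨆ j, |A i j|) (Set.finite_range _).bddAbove i)

theorem maxAbs_le {C : ℝ} (hC : 0 ≤ C) (h : ∀ i j, |A i j| ≤ C) : maxAbs A ≤ C :=
  Real.iSup_le (fun i => Real.iSup_le (h i) hC) hC

theorem maxAbs_nonneg (A : Matrix (Fin n) (Fin n) ℝ) : 0 ≤ maxAbs A :=
  Real.iSup_nonneg fun _ => Real.iSup_nonneg fun _ => abs_nonneg _

theorem maxAbs_pos (hA : A ≠ 0) : 0 < maxAbs A := by
  obtain ⟨i, j, hij⟩ : ∃ i j, A i j ≠ 0 := by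
    contrapose! hA
    exact ext hA
  exact (abs_pos.mpr hij).trans_le (abs_le_maxAbs A i j)

theorem sum_col_sq_le (A : Matrix (Fin n) (Fin n) ℝ) (j : Fin n) :
    ∑ i, A i j ^ 2 ≤ n * maxAbs A ^ 2 :=
  calc ∑ i, A i j ^ 2
    _ ≤ ∑ _i : Fin n, maxAbs A ^ 2 :=
      Finset.sum_le_sum fun i _ => sq_le_sq' (neg_le_of_abs_le (abs_le_maxAbs A i j))
        (le_of_abs_le (abs_le_maxAbs A i j))
    _ = n * maxAbs A ^ 2 := by simp

theorem abs_geEntry_le_maxGE (A : Matrix (Fin n) (Fin n) ℝ) {k i j : Fin n} (hi : k ≤ i)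
    (hj : k ≤ j) : |geEntry A k i j| ≤ maxGE A :=
  ((le_ciSup (f := fun j : {j // k ≤ j} => |geEntry A k i j|)
    (Set.finite_range _).bddAbove ⟨j, hj⟩).trans
  (le_ciSup (f := fun i : {i // k ≤ i} => ⨆ j : {j // k ≤ j}, |geEntry A k i j|)
    (Set.finite_range _).bddAbove ⟨i, hi⟩)).trans
  (le_ciSup (f := fun k => ⨆ i : {i // k ≤ i}, ⨆ j : {j // k ≤ j}, |geEntry A k i j|)
    (Set.finite_range _).bddAbove k)

theorem maxGE_le {C : ℝ} (hC : 0 ≤ C)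
    (h : ∀ k i j, k ≤ i → k ≤ j → |geEntry A k i j| ≤ C) : maxGE A ≤ C :=
  Real.iSup_le (fun k => Real.iSup_le (fun i => Real.iSup_le (fun j => h k i j i.2 j.2) hC) hC) hC

theorem maxGE_lt_of_le_of_last_lt {m : ℕ} {A : Matrix (Fin (m + 1)) (Fin (m + 1)) ℝ} {B C : ℝ}
    (hB : 0 ≤ B) (hBC : B < C)
    (h : ∀ k i j, k < Fin.last m → k ≤ i → k ≤ j → |geEntry A k i j| ≤ B)
    (hlast : |geEntry A (Fin.last m) (Fin.last m) (Fin.last m)| < C) : maxGE A < C := by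
  refine (maxGE_le (C := max B _) (hB.trans (le_max_left _ _)) fun k i j hi hj => ?_).trans_lt
    (max_lt hBC hlast)
  rcases (Fin.le_last k).lt_or_eq with hk | rfl
  · exact (h k i j hk hi hj).trans (le_max_left _ _)
  · rw [Fin.last_le_iff.mp hi, Fin.last_le_iff.mp hj]
    exact le_max_right _ _

theorem maxAbs_le_maxGE (A : Matrix (Fin n) (Fin n) ℝ) : maxAbs A ≤ maxGE A := by
  have hnonneg : 0 ≤ maxGE A :=
    Real.iSup_nonneg fun _ => Real.iSup_nonneg fun _ => Real.iSup_nonneg fun _ => abs_nonneg _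
  refine maxAbs_le hnonneg fun i j => ?_
  have : NeZero n := ⟨i.pos.ne'⟩
  rw [← geEntry_of_val_eq_zero A (k := 0) rfl]
  exact abs_geEntry_le_maxGE A (Fin.zero_le i) (Fin.zero_le j)

theorem one_le_growth (hA : A ≠ 0) : 1 ≤ growth A :=
  (one_le_div (maxAbs_pos hA)).mpr (maxAbs_le_maxGE A)

end MaxNorms

section PartialPivoting

variable {n : ℕ} {A : Matrix (Fin n) (Fin n) ℝ}

theorem IsPP.geEntry_pivot_ne_zero (hPP : IsPP A) (hA : IsUnit A.det) {k : Fin n}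
    (hk : IsUnit (leadingBlock A k.isLt.le).det) : geEntry A k k k ≠ 0 := by
  intro hzero
  have hcol_zero (i : Fin n) : geEntry A k i k = 0 := by
    rcases lt_or_ge i k with hi | hi
    · exact geEntry_eq_zero_of_lt hk hi k
    · simpa [hzero] using hPP k i hi
  have hcol : A.col k = ∑ a, elimCoeff A k k a • A.col (Fin.castLE k.isLt.le a) := by
    ext i
    have := hcol_zero i
    rw [geEntry_eq_sub_sum_elimCoeff, sub_eq_zero] at this
    simpa [Finset.sum_apply, mul_comm] using this
  have hspan : A.col k ∈ Submodule.span ℝ (A.col '' Set.Iio k) := by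
    rw [hcol]
    exact Submodule.sum_mem _ fun a _ => Submodule.smul_mem _ _
      (Submodule.subset_span ⟨_, a.isLt, rfl⟩)
  exact (linearIndependent_cols_of_isUnit ((isUnit_iff_isUnit_det A).mpr hA)).notMem_span_image
    (lt_irrefl k) hspan

theorem IsPP.isUnit_det_leadingBlock (hPP : IsPP A) (hA : IsUnit A.det) {k : ℕ} (hk : k ≤ n) :
    IsUnit (leadingBlock A hk).det := by
  induction k with
  | zero => simp
  | succ k ih =>
    have hdet := ih (Nat.le_of_succ_le hk)
    rw [det_leadingBlock_succ (k := ⟨k, hk⟩) hdet]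
    exact hdet.mul (hPP.geEntry_pivot_ne_zero hA (k := ⟨k, hk⟩) hdet).isUnit

theorem IsPP.abs_geEntry_succ_le (hPP : IsPP A) (hA : IsUnit A.det) {p i : Fin n}
    (hp : p.val + 1 < n) (hi : p ≤ i) (j : Fin n) :
    |geEntry A ⟨p + 1, hp⟩ i j| ≤ |geEntry A p i j| + |geEntry A p p j| := by
  have hdet := hPP.isUnit_det_leadingBlock hA p.isLt.le
  have hpivot := hPP.geEntry_pivot_ne_zero hA hdet
  have hmultiplier : |geEntry A p i p / geEntry A p p p| ≤ 1 := by
    rw [abs_div]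
    exact div_le_one_of_le₀ (hPP p i hi) (abs_nonneg _)
  calc |geEntry A ⟨p + 1, hp⟩ i j|
    _ = |geEntry A p i j - geEntry A p i p / geEntry A p p p * geEntry A p p j| := by
      rw [geEntry_succ hp hdet hpivot, div_mul_comm]
    _ ≤ |geEntry A p i j| + |geEntry A p i p / geEntry A p p p| * |geEntry A p p j| := by
      rw [← abs_mul]
      exact abs_sub _ _
    _ ≤ |geEntry A p i j| + |geEntry A p p j| := by
      gcongr
      exact mul_le_of_le_one_left (abs_nonneg _) hmultiplier

theorem IsPP.abs_geEntry_le_add (hPP : IsPP A) (hA : IsUnit A.det) {k i : Fin n} (hi : k ≤ i)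
    (j : Fin n) : |geEntry A k i j| ≤ |A i j| + (2 ^ k.val - 1) * maxAbs A := by
  obtain ⟨k, hk⟩ := k
  induction k generalizing i with
  | zero => simp [geEntry_of_val_eq_zero]
  | succ k ih =>
    have hki : ⟨k, Nat.lt_of_succ_lt hk⟩ ≤ i := (Fin.mk_le_mk.mpr k.le_succ).trans hi
    calc |geEntry A ⟨k + 1, hk⟩ i j|
      _ ≤ |geEntry A ⟨k, _⟩ i j| + |geEntry A ⟨k, _⟩ ⟨k, _⟩ j| :=
        hPP.abs_geEntry_succ_le hA (p := ⟨k, Nat.lt_of_succ_lt hk⟩) hk hki j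
      _ ≤ (|A i j| + (2 ^ k - 1) * maxAbs A) + (maxAbs A + (2 ^ k - 1) * maxAbs A) :=
        add_le_add (ih _ hki) ((ih _ le_rfl).trans (by gcongr; exact abs_le_maxAbs A _ j))
      _ = |A i j| + (2 ^ (k + 1) - 1) * maxAbs A := by ring

theorem IsPP.abs_geEntry_le (hPP : IsPP A) (hA : IsUnit A.det) {k i : Fin n} (hi : k ≤ i)
    (j : Fin n) : |geEntry A k i j| ≤ 2 ^ k.val * maxAbs A := by
  linarith [hPP.abs_geEntry_le_add hA hi j, abs_le_maxAbs A i j]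

theorem IsPP.growth_le (hPP : IsPP A) (hA : IsUnit A.det) : growth A ≤ 2 ^ (n - 1) := by
  have hM := maxAbs_nonneg A
  refine div_le_of_le_mul₀ hM (by positivity) (maxGE_le (by positivity) fun k i j hi _ => ?_)
  refine (hPP.abs_geEntry_le hA hi j).trans ?_
  gcongr
  · norm_num
  · exact Nat.le_sub_one_of_lt k.isLt

end PartialPivoting

section Orthogonal

variable {n : ℕ} {A : Matrix (Fin n) (Fin n) ℝ}

theorem one_le_card_mul_maxAbs_sq (hA : Aᵀ * A = 1) (j : Fin n) : 1 ≤ n * maxAbs A ^ 2 := by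
  have hcol : ∑ i, A i j ^ 2 = 1 := by
    simpa [mul_apply, sq] using congrFun (congrFun hA j) j
  exact hcol.symm.trans_le (sum_col_sq_le A j)

theorem succ_lt_two_pow {m : ℕ} (hm : 2 ≤ m) : m + 1 < 2 ^ m := by
  obtain ⟨l, rfl⟩ := Nat.exists_eq_add_of_le' hm
  have := (l + 1).lt_two_pow_self
  rw [pow_succ]
  omega

theorem IsPP.abs_geEntry_last_lt {m : ℕ} {A : Matrix (Fin (m + 1)) (Fin (m + 1)) ℝ}
    (hPP : IsPP A) (hA : Aᵀ * A = 1) (hm : 2 ≤ m) :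
    |geEntry A (Fin.last m) (Fin.last m) (Fin.last m)| < 2 ^ m * maxAbs A := by
  have hunit : IsUnit A.det := isUnit_det_of_left_inverse hA
  set p := geEntry A (Fin.last m) (Fin.last m) (Fin.last m)
  have hrecip : |p| * |A (Fin.last m) (Fin.last m)| = 1 := by
    have hinv := geEntry_last_mul_inv hunit (hPP.isUnit_det_leadingBlock hunit m.le_succ)
    rw [inv_eq_left_inv hA, transpose_apply] at hinv
    rw [← abs_mul, hinv, abs_one]
  have hbound : |p| ≤ |A (Fin.last m) (Fin.last m)| + (2 ^ m - 1) * maxAbs A :=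
    hPP.abs_geEntry_le_add hunit le_rfl (Fin.last m)
  have hnorm : 1 ≤ (m + 1) * maxAbs A ^ 2 := by
    exact_mod_cast one_le_card_mul_maxAbs_sq hA (Fin.last m)
  have hM := maxAbs_nonneg A
  have hpow : (m + 1 : ℝ) < 2 ^ m := mod_cast succ_lt_two_pow hm
  by_contra! hge
  have hcorner : maxAbs A ≤ |A (Fin.last m) (Fin.last m)| := by linarith
  have hcontra : (1 : ℝ) < 1 :=
    calc (1 : ℝ)
      _ ≤ (m + 1) * maxAbs A ^ 2 := hnorm
      _ < 2 ^ m * maxAbs A ^ 2 := by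
        gcongr
        exact pow_pos (hM.lt_of_ne' fun h => by norm_num [h] at hnorm) 2
      _ = 2 ^ m * maxAbs A * maxAbs A := by ring
      _ ≤ |p| * |A (Fin.last m) (Fin.last m)| := by gcongr
      _ = 1 := hrecip
  exact lt_irrefl _ hcontra

theorem IsPP.growth_lt (hPP : IsPP A) (hA : Aᵀ * A = 1) (hn : 3 ≤ n) :
    growth A < 2 ^ (n - 1) := by
  obtain ⟨m, rfl⟩ : ∃ m, n = m + 1 := ⟨n - 1, by omega⟩
  have hunit : IsUnit A.det := isUnit_det_of_left_inverse hA
  have hM : 0 < maxAbs A := maxAbs_pos (by rintro rfl; simp at hA)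
  rw [growth, div_lt_iff₀ hM, Nat.add_sub_cancel]
  refine maxGE_lt_of_le_of_last_lt (B := 2 ^ (m - 1) * maxAbs A) (by positivity) ?_
    (fun k i j hk hi _ => (hPP.abs_geEntry_le hunit hi j).trans ?_)
    (hPP.abs_geEntry_last_lt hA (by omega))
  · gcongr
    · norm_num
    · omega
  · gcongr
    · norm_num
    · exact Nat.le_sub_one_of_lt hk

theorem IsPermMatrix.transpose_mul_self {P : Matrix (Fin n) (Fin n) ℝ} (hP : IsPermMatrix P) :
    Pᵀ * P = 1 := by
  obtain ⟨σ, rfl⟩ := hP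
  rw [transpose_permMatrix, ← permMatrix_mul, mul_inv_cancel, permMatrix_one]

theorem IsPermMatrix.transpose_mul_mul_self {P Q : Matrix (Fin n) (Fin n) ℝ} (hP : IsPermMatrix P)
    (hQ : Qᵀ * Q = 1) : (P * Q)ᵀ * (P * Q) = 1 := by
  rw [transpose_mul, Matrix.mul_assoc, ← Matrix.mul_assoc Pᵀ, hP.transpose_mul_self,
    Matrix.one_mul, hQ]

/-- The set of all GEPP growth factors of orthogonal `n × n` matrices. Ties in the choice of pivots
may make several row orders `P * Q` of `Q` partially pivoted; the growth factors of all of them are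
included. -/
def orthogonalGEPPGrowth (n : ℕ) : Set ℝ :=
  {x : ℝ | ∃ Q : Matrix (Fin n) (Fin n) ℝ, Qᵀ * Q = 1 ∧
    ∃ P : Matrix (Fin n) (Fin n) ℝ, IsPermMatrix P ∧ IsPP (P * Q) ∧ x = growth (P * Q)}

theorem two_pow_mem_upperBounds_orthogonalGEPPGrowth (n : ℕ) :
    2 ^ (n - 1) ∈ upperBounds (orthogonalGEPPGrowth n) := by
  rintro _ ⟨Q, hQ, P, hP, hPP, rfl⟩
  exact hPP.growth_le (isUnit_det_of_left_inverse (hP.transpose_mul_mul_self hQ))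

theorem IsPP.isGreatest_orthogonalGEPPGrowth (hPP : IsPP A) (hA : Aᵀ * A = 1)
    (hgrowth : 2 ^ (n - 1) ≤ growth A) : IsGreatest (orthogonalGEPPGrowth n) (2 ^ (n - 1)) := by
  refine ⟨⟨A, hA, 1, ⟨1, permMatrix_one.symm⟩, by rwa [Matrix.one_mul], ?_⟩,
    two_pow_mem_upperBounds_orthogonalGEPPGrowth n⟩
  rw [Matrix.one_mul]
  exact hgrowth.antisymm (hPP.growth_le (isUnit_det_of_left_inverse hA))

end Orthogonal

theorem isGreatest_orthogonalGEPPGrowth_one : IsGreatest (orthogonalGEPPGrowth 1) (2 ^ (1 - 1)) :=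
  have hPP : IsPP (1 : Matrix (Fin 1) (Fin 1) ℝ) := fun k i _ => by rw [Subsingleton.elim i k]
  hPP.isGreatest_orthogonalGEPPGrowth (by simp)
    (by simpa using one_le_growth (one_ne_zero (α := Matrix (Fin 1) (Fin 1) ℝ)))

/-- The `2 × 2` Hadamard matrix scaled by `s`; it is orthogonal for `s² = 1 / 2`. -/
def scaledHadamard (s : ℝ) : Matrix (Fin 2) (Fin 2) ℝ :=
  !![s, s; s, -s]

theorem scaledHadamard_transpose_mul_self {s : ℝ} (hs : s * s = 1 / 2) :
    (scaledHadamard s)ᵀ * scaledHadamard s = 1 := by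
  ext i j
  fin_cases i <;> fin_cases j <;> norm_num [scaledHadamard, mul_apply, hs]

theorem isPP_scaledHadamard (s : ℝ) : IsPP (scaledHadamard s) := by
  intro k i hki
  rcases hki.eq_or_lt with rfl | hlt
  · exact le_rfl
  · obtain ⟨rfl, rfl⟩ : k = 0 ∧ i = 1 := by omega
    simp [geEntry_of_val_eq_zero, scaledHadamard]

theorem two_le_growth_scaledHadamard {s : ℝ} (hs : s ≠ 0) : 2 ≤ growth (scaledHadamard s) := by
  have hpivot : geEntry (scaledHadamard s) 1 1 1 = -(2 * s) := by
    have hsucc := geEntry_succ (A := scaledHadamard s) (p := 0) one_lt_two (by simp)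
      (by simpa [geEntry_of_val_eq_zero, scaledHadamard] using hs) 1 1
    simp only [geEntry_of_val_eq_zero _ (k := (0 : Fin 2)) rfl] at hsucc
    calc geEntry (scaledHadamard s) 1 1 1
      _ = -s - s / s * s := hsucc
      _ = -(2 * s) := by rw [div_self hs]; ring
  have hmaxAbs : maxAbs (scaledHadamard s) ≤ |s| := by
    refine maxAbs_le (abs_nonneg s) fun i j => ?_
    fin_cases i <;> fin_cases j <;> simp [scaledHadamard]
  have hne : scaledHadamard s ≠ 0 := fun h => hs (congrFun (congrFun h 0) 0)
  rw [growth, le_div_iff₀ (maxAbs_pos hne)]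
  calc 2 * maxAbs (scaledHadamard s)
    _ ≤ 2 * |s| := by gcongr
    _ = |geEntry (scaledHadamard s) 1 1 1| := by rw [hpivot, abs_neg, abs_mul, abs_two]
    _ ≤ maxGE (scaledHadamard s) := abs_geEntry_le_maxGE _ le_rfl le_rfl

theorem isGreatest_orthogonalGEPPGrowth_two :
    IsGreatest (orthogonalGEPPGrowth 2) (2 ^ (2 - 1)) := by
  have hsq : √(1 / 2) * √(1 / 2) = 1 / 2 := Real.mul_self_sqrt (by norm_num)
  have hpos : 0 < √(1 / 2) := by positivity
  exact (isPP_scaledHadamard _).isGreatest_orthogonalGEPPGrowth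
    (scaledHadamard_transpose_mul_self hsq) (by simpa using two_le_growth_scaledHadamard hpos.ne')

/-- for `n ∈ {1, 2}` the supremum of `ρ^GEPP` over `O(n)` equals `2^{n-1}`;
for every `n ≥ 3` and every `Q ∈ O(n)`, `ρ^GEPP(Q) < 2^{n-1}`. -/
theorem orth_gepp_growth_sup :
    (∀ n : ℕ, n = 1 ∨ n = 2 →
      sSup {x : ℝ | ∃ Q : Matrix (Fin n) (Fin n) ℝ, Qᵀ * Q = 1 ∧
        ∃ P : Matrix (Fin n) (Fin n) ℝ, IsPermMatrix P ∧ IsPP (P * Q) ∧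
          x = growth (P * Q)} = 2 ^ (n - 1)) ∧
    (∀ n : ℕ, 3 ≤ n → ∀ Q : Matrix (Fin n) (Fin n) ℝ, Qᵀ * Q = 1 →
      ∀ P : Matrix (Fin n) (Fin n) ℝ, IsPermMatrix P → IsPP (P * Q) →
        growth (P * Q) < 2 ^ (n - 1)) := by
  refine ⟨?_, fun n hn Q hQ P hP hPP => hPP.growth_lt (hP.transpose_mul_mul_self hQ) hn⟩
  rintro n (rfl | rfl)
  · exact isGreatest_orthogonalGEPPGrowth_one.csSup_eq
  · exact isGreatest_orthogonalGEPPGrowth_two.csSup_eq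
end

section
/- For every n ≥ 3, the orthogonal matrix Q_n = Q̂ D̂^{−1/2} satisfies ‖Q_n e_n‖_∞ = 2^{n−2}/√(2α_{n−1}), and consequently √(2α_{n−1}) / ‖Q_n‖_max ≤ 2^{n−1}·(2 + 4^{2−n})/3 < 2^{n−1}, where ‖Q_n‖_max = max_{i,j} |(Q_n)_{ij}| and ‖Q_n e_n‖_∞ is the maximum absolute value of an entry of the last column of Q_n. -/
open Matrix Filter

/-!
The last column of `Q̂` is largest at the top, where its entry is `2 ^ (n - 2)`, and it is
normalized by `√(2 α_{n-1})`; this gives `‖Q_n e_n‖_∞`. Since `‖Q_n‖_max ≥ ‖Q_n e_n‖_∞`, the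
quotient in question is at most `2 α_{n-1} / 2 ^ (n - 2)`, where
`α_{n-1} = 4 ^ (n - 2) * (2 + 4 ^ (2 - n)) / 3`.
-/

lemma iSup_abs_col_le_maxAbs {n : ℕ} (A : Matrix (Fin n) (Fin n) ℝ) (j : Fin n) :
    ⨆ i, |A i j| ≤ maxAbs A :=
  ciSup_mono (Set.finite_range _).bddAbove fun i =>
    le_ciSup (f := fun j => |A i j|) (Set.finite_range _).bddAbove j

lemma alpha_pos (j : ℕ) : 0 < alpha j := by
  have one_le_four_pow : (1 : ℝ) ≤ 4 ^ (j - 1) := one_le_pow₀ (by norm_num)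
  unfold alpha
  linarith

lemma alpha_succ (m : ℕ) : alpha (m + 1) = 4 ^ m * ((2 + ((4 : ℝ) ^ m)⁻¹) / 3) := by
  rw [alpha, Nat.add_sub_cancel]
  field_simp
  ring

lemma two_mul_alpha_succ_div_two_pow (m : ℕ) :
    2 * alpha (m + 1) / 2 ^ m = 2 ^ (m + 1) * ((2 + ((4 : ℝ) ^ m)⁻¹) / 3) := by
  have four_pow : (4 : ℝ) ^ m = 2 ^ m * 2 ^ m := by rw [← mul_pow]; norm_num
  rw [alpha_succ, div_eq_iff (by positivity), pow_succ]
  linear_combination (2 * ((2 + ((4 : ℝ) ^ m)⁻¹) / 3)) * four_pow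

lemma Qhat_last_last (n : ℕ) : Qhat (n + 1) (Fin.last n) (Fin.last n) = 1 := by
  simp [Qhat]

lemma Qhat_castSucc_last (n : ℕ) (i : Fin n) :
    Qhat (n + 1) i.castSucc (Fin.last n) = 2 ^ (n - 1 - (i : ℕ)) := by
  simp [Qhat, i.isLt.ne]

lemma Dhat_last_last (m : ℕ) :
    Dhat (m + 2) (Fin.last (m + 1)) (Fin.last (m + 1)) = 2 * alpha (m + 1) := by
  simp [Dhat]

lemma Qmat_apply (n : ℕ) (i j : Fin n) : Qmat n i j = Qhat n i j / √(Dhat n j j) := by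
  rw [Qmat, mul_diagonal, div_eq_mul_inv]

lemma iSup_abs_Qhat_last (m : ℕ) :
    ⨆ i, |Qhat (m + 2) i (Fin.last (m + 1))| = 2 ^ m := by
  apply le_antisymm
  · refine ciSup_le fun i => ?_
    cases i using Fin.lastCases with
    | last => simpa [Qhat_last_last] using one_le_pow₀ (n := m) (one_le_two (α := ℝ))
    | cast i =>
      rw [Qhat_castSucc_last, abs_of_pos (by positivity)]
      exact pow_le_pow_right₀ one_le_two (by omega)
  · refine le_ciSup_of_le (Set.finite_range _).bddAbove (0 : Fin (m + 1)).castSucc ?_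
    rw [Qhat_castSucc_last]
    exact le_abs_self _

lemma iSup_abs_Qmat_last (m : ℕ) :
    ⨆ i, |Qmat (m + 2) i (Fin.last (m + 1))| = 2 ^ m / √(2 * alpha (m + 1)) := by
  have normalizer_nonneg : 0 ≤ √(2 * alpha (m + 1)) := Real.sqrt_nonneg _
  simp only [Qmat_apply, Dhat_last_last, abs_div, abs_of_nonneg normalizer_nonneg]
  simp only [div_eq_mul_inv]
  rw [← Real.iSup_mul_of_nonneg (inv_nonneg.2 normalizer_nonneg), iSup_abs_Qhat_last]

lemma sqrt_div_maxAbs_Qmat_le (m : ℕ) :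
    √(2 * alpha (m + 1)) / maxAbs (Qmat (m + 2)) ≤ 2 * alpha (m + 1) / 2 ^ m := by
  have hα : 0 < alpha (m + 1) := alpha_pos (m + 1)
  calc √(2 * alpha (m + 1)) / maxAbs (Qmat (m + 2))
      ≤ √(2 * alpha (m + 1)) / (2 ^ m / √(2 * alpha (m + 1))) := by
        gcongr
        exact iSup_abs_Qmat_last m ▸ iSup_abs_col_le_maxAbs (Qmat (m + 2)) (Fin.last (m + 1))
    _ = 2 * alpha (m + 1) / 2 ^ m := by
        rw [div_div_eq_mul_div, Real.mul_self_sqrt (by positivity)]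

/-- for `n ≥ 3`, `‖Q_n e_n‖_∞ = 2^{n-2}/√(2α_{n-1})`, and consequently
`√(2α_{n-1})/‖Q_n‖_max ≤ 2^{n-1}·(2 + 4^{2-n})/3 < 2^{n-1}`. -/
theorem Qn_last_column_bound (n : ℕ) (hn : 3 ≤ n) :
    (⨆ i : Fin n, |Qmat n i ⟨n - 1, by omega⟩|) =
      2 ^ (n - 2) / Real.sqrt (2 * alpha (n - 1)) ∧
    Real.sqrt (2 * alpha (n - 1)) / maxAbs (Qmat n) ≤
      2 ^ (n - 1) * ((2 + (4 : ℝ) ^ ((2 : ℤ) - (n : ℤ))) / 3) ∧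
    2 ^ (n - 1) * ((2 + (4 : ℝ) ^ ((2 : ℤ) - (n : ℤ))) / 3) < 2 ^ (n - 1) := by
  obtain ⟨m, rfl⟩ : ∃ m, n = m + 2 := ⟨n - 2, by omega⟩
  have zpow_eq : (4 : ℝ) ^ ((2 : ℤ) - (m + 2 : ℕ)) = (4 ^ m)⁻¹ := by
    rw [show (2 : ℤ) - (m + 2 : ℕ) = -m by omega, _root_.zpow_neg, _root_.zpow_natCast]
  rw [zpow_eq]
  refine ⟨iSup_abs_Qmat_last m, ?_, ?_⟩
  · exact (sqrt_div_maxAbs_Qmat_le m).trans_eq (two_mul_alpha_succ_div_two_pow m)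
  · have inv_lt_one : ((4 : ℝ) ^ m)⁻¹ < 1 :=
      inv_lt_one_of_one_lt₀ (one_lt_pow₀ (by norm_num) (by omega))
    exact mul_lt_of_lt_one_right (by positivity) (by linarith)
end
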